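/- The control function (x,y) ↦ l(x,y) is a continuous function on ℝ^d × ℝ^d. -/

import Mathlib

open scoped BigOperators
open MeasureTheory

noncomputable section

/-- A path `φ : ℝ → ℝ^d` is piecewise `C¹` on `[0,1]` if it is continuous on `[0,1]`
and there is a finite partition `0 = t₀ < t₁ < ⋯ < tₙ = 1` such that `φ` is `C¹` on
each subinterval `[tᵢ, tᵢ₊₁]`. -/
def PiecewiseC1 {d : ℕ} (φ : ℝ → EuclideanSpace ℝ (Fin d)) : Prop :=
  ContinuousOn φ (Set.Icc 0 1) ∧
  ∃ (n : ℕ) (t : Fin (n + 1) → ℝ), StrictMono t ∧ t 0 = 0 ∧ t (Fin.last n) = 1 ∧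
    ∀ i : Fin n, ContDiffOn ℝ 1 φ (Set.Icc (t i.castSucc) (t i.succ))

/-- The action `S(φ) = ∫₀¹ L(φ(t), φ'(t)) dt` of a path. -/
def action {d : ℕ} (L : EuclideanSpace ℝ (Fin d) → EuclideanSpace ℝ (Fin d) → ℝ)
    (φ : ℝ → EuclideanSpace ℝ (Fin d)) : ℝ :=
  ∫ t in (0:ℝ)..1, L (φ t) (deriv φ t)

/-- The set of actions of piecewise `C¹` paths from `x` to `y`. -/
def actionSet {d : ℕ} (L : EuclideanSpace ℝ (Fin d) → EuclideanSpace ℝ (Fin d) → ℝ)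
    (x y : EuclideanSpace ℝ (Fin d)) : Set ℝ :=
  {a | ∃ φ : ℝ → EuclideanSpace ℝ (Fin d),
    PiecewiseC1 φ ∧ φ 0 = x ∧ φ 1 = y ∧ action L φ = a}

/-- The control function `l(x,y) = inf { S(φ) : φ piecewise C¹, φ(0) = x, φ(1) = y }`. -/
def controlFn {d : ℕ} (L : EuclideanSpace ℝ (Fin d) → EuclideanSpace ℝ (Fin d) → ℝ)
    (x y : EuclideanSpace ℝ (Fin d)) : ℝ :=
  sInf (actionSet L x y)

/-!
The Lagrangian is autonomous, so a path may be delayed as long as the lost time is recovered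
elsewhere. To move the endpoints of a path `φ` of bounded action, cut `[0,1]` into `N` equal
intervals and pick one on which the action of `φ` is at most average, hence `O(1/N)`. Running
through that interval at double speed frees a time `1/(2N)`, and by the doubling property
`L(x,2p) ≤ A L(x,p) + B` this changes the action by only `O(1/N)`. The freed time is spent on two
straight connecting segments at the ends; if the endpoints move little compared with `1/N`, the
segments have small velocity and cost `O(1/N)` as well. All constants depend only on a bound for the
action, so the estimate is uniform near any pair of endpoints, which gives continuity.
-/

open Set Filter Topology Function

section Paths

variable {E : Type*} [NormedAddCommGroup E] [NormedSpace ℝ E] {φ ψ : ℝ → E} {a b c : ℝ}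

/-- `φ` is `C¹` on the nondegenerate interval `[a, b]`: a single piece of a piecewise `C¹` path. -/
def IsC1Piece (φ : ℝ → E) (a b : ℝ) : Prop :=
  a < b ∧ ContDiffOn ℝ 1 φ (Icc a b)

/-- `φ` is piecewise `C¹` on `[a, b]`, encoded as the existence of a chain of adjacent `C¹` pieces
leading from `a` to `b`; the empty chain makes every `φ` piecewise `C¹` on `[a, a]`. -/
def PiecewiseC1On (φ : ℝ → E) (a b : ℝ) : Prop :=
  Relation.ReflTransGen (IsC1Piece φ) a b

namespace PiecewiseC1On

theorem le (h : PiecewiseC1On φ a b) : a ≤ b := by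
  induction h with
  | refl => rfl
  | tail _ piece ih => exact ih.trans piece.1.le

theorem of_contDiffOn (hab : a ≤ b) (h : ContDiffOn ℝ 1 φ (Icc a b)) : PiecewiseC1On φ a b := by
  rcases hab.eq_or_lt with rfl | hlt
  · exact .refl
  · exact .single ⟨hlt, h⟩

theorem trans (hab : PiecewiseC1On φ a b) (hbc : PiecewiseC1On φ b c) : PiecewiseC1On φ a c :=
  Relation.ReflTransGen.trans hab hbc

theorem congr (h : PiecewiseC1On φ a b) (hψ : EqOn ψ φ (Icc a b)) : PiecewiseC1On ψ a b := by
  induction h with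
  | refl => exact .refl
  | tail hab piece ih =>
    exact (ih (hψ.mono (Icc_subset_Icc_right piece.1.le))).tail
      ⟨piece.1, piece.2.congr (hψ.mono (Icc_subset_Icc_left (le hab)))⟩

theorem split (h : PiecewiseC1On φ a c) (hb : b ∈ Icc a c) :
    PiecewiseC1On φ a b ∧ PiecewiseC1On φ b c := by
  induction h with
  | refl =>
    obtain rfl : a = b := le_antisymm hb.1 hb.2
    exact ⟨.refl, .refl⟩
  | @tail m c ham piece ih =>
    rcases le_total b m with hbm | hmb
    · exact ⟨(ih ⟨hb.1, hbm⟩).1, (ih ⟨hb.1, hbm⟩).2.tail piece⟩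
    · exact ⟨ham.trans (of_contDiffOn hmb (piece.2.mono (Icc_subset_Icc_right hb.2))),
        of_contDiffOn hb.2 (piece.2.mono (Icc_subset_Icc_left hmb))⟩

theorem mono {s t : ℝ} (h : PiecewiseC1On φ a b) (has : a ≤ s) (hst : s ≤ t) (htb : t ≤ b) :
    PiecewiseC1On φ s t :=
  ((h.split ⟨has, hst.trans htb⟩).2.split ⟨hst, htb⟩).1

theorem continuousOn (h : PiecewiseC1On φ a b) : ContinuousOn φ (Icc a b) := by
  induction h with
  | refl => simp
  | tail hab piece ih =>
    rw [← Icc_union_Icc_eq_Icc (le hab) piece.1.le]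
    exact ih.union_of_isClosed piece.2.continuousOn isClosed_Icc isClosed_Icc

theorem comp_mul_add {k m : ℝ} (hk : 0 < k) (h : PiecewiseC1On φ (k * a + m) (k * b + m)) :
    PiecewiseC1On (fun t ↦ φ (k * t + m)) a b := by
  have inv_apply (t : ℝ) : (k * t + m - m) / k = t := by field_simp; ring
  have lifted := Relation.ReflTransGen.lift (p := IsC1Piece fun t ↦ φ (k * t + m))
    (fun u ↦ (u - m) / k) ?_ _ _ h
  · simpa only [PiecewiseC1On, onFun, inv_apply] using lifted
  rintro u v ⟨huv, hφ⟩
  refine ⟨div_lt_div_of_pos_right (sub_lt_sub_right huv m) hk, hφ.comp (by fun_prop) fun t ht ↦ ?_⟩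
  rw [mem_Icc, div_le_iff₀ hk, le_div_iff₀ hk] at ht
  constructor <;> linarith [ht.1, ht.2]

theorem of_partition {n : ℕ} {t : Fin (n + 1) → ℝ} (ht : StrictMono t)
    (h : ∀ i : Fin n, ContDiffOn ℝ 1 φ (Icc (t i.castSucc) (t i.succ))) :
    PiecewiseC1On φ (t 0) (t (Fin.last n)) := by
  suffices ∀ i, PiecewiseC1On φ (t 0) (t i) from this _
  intro i
  induction i using Fin.induction with
  | zero => exact .refl
  | succ i ih => exact ih.tail ⟨ht Fin.castSucc_lt_succ, h i⟩

theorem exists_partition (h : PiecewiseC1On φ a b) :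
    ∃ (n : ℕ) (t : Fin (n + 1) → ℝ), StrictMono t ∧ t 0 = a ∧ t (Fin.last n) = b ∧
      ∀ i : Fin n, ContDiffOn ℝ 1 φ (Icc (t i.castSucc) (t i.succ)) := by
  induction h using Relation.ReflTransGen.head_induction_on with
  | refl => exact ⟨0, fun _ ↦ b, Fin.strictMono_iff_lt_succ.2 finZeroElim, rfl, rfl, finZeroElim⟩
  | @head a m piece _ ih =>
    obtain ⟨n, t, ht, rfl, hlast, hC1⟩ := ih
    refine ⟨n + 1, Matrix.vecCons a t, strictMono_vecCons.2 ⟨piece.1, ht⟩, rfl, hlast,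
      Fin.cases piece.2 hC1⟩

end PiecewiseC1On

/-- The action `∫ₐᵇ L(φ(t), φ'(t)) dt` of `φ` over `[a, b]`. -/
def actionOn (L : E → E → ℝ) (φ : ℝ → E) (a b : ℝ) : ℝ :=
  ∫ t in a..b, L (φ t) (deriv φ t)

variable {L : E → E → ℝ}

theorem actionOn_congr (hab : a ≤ b) (h : EqOn φ ψ (Icc a b)) :
    actionOn L φ a b = actionOn L ψ a b := by
  refine intervalIntegral.integral_congr_Ioo_of_le hab fun t ht ↦ ?_
  have eventuallyEq : φ =ᶠ[𝓝 t] ψ := h.eventuallyEq_of_mem (Icc_mem_nhds ht.1 ht.2)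
  simp only [eventuallyEq.deriv_eq, eventuallyEq.eq_of_nhds]

theorem actionOn_comp_mul_add {k : ℝ} (hk : k ≠ 0) (m : ℝ) :
    actionOn L (fun t ↦ φ (k * t + m)) a b =
      k⁻¹ * actionOn (fun x p ↦ L x (k • p)) φ (k * a + m) (k * b + m) := by
  have deriv_eq (t : ℝ) : deriv (fun t ↦ φ (k * t + m)) t = k • deriv φ (k * t + m) := by
    rw [deriv_comp_mul_left k (fun u ↦ φ (u + m)), deriv_comp_add_const]
  simp only [actionOn, deriv_eq]
  exact intervalIntegral.integral_comp_mul_add (fun u ↦ L (φ u) (k • deriv φ u)) hk m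

namespace PiecewiseC1On

theorem intervalIntegrable (h : PiecewiseC1On φ a b) (hL : Continuous (uncurry L)) :
    IntervalIntegrable (fun t ↦ L (φ t) (deriv φ t)) volume a b := by
  induction h with
  | refl => exact .refl
  | @tail u v _ piece ih =>
    refine ih.trans ?_
    obtain ⟨huv, hφ⟩ := piece
    have continuousOn_lagrangian :
        ContinuousOn (fun t ↦ L (φ t) (derivWithin φ (Icc u v) t)) (Icc u v) :=
      hL.comp_continuousOn
        (hφ.continuousOn.prodMk (hφ.continuousOn_derivWithin (uniqueDiffOn_Icc huv) le_rfl))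
    refine (continuousOn_lagrangian.intervalIntegrable_of_Icc huv.le).congr_uIoo fun t ht ↦ ?_
    rw [uIoo_of_le huv.le] at ht
    simp only [derivWithin_of_mem_nhds (Icc_mem_nhds ht.1 ht.2)]

theorem actionOn_add (hab : PiecewiseC1On φ a b) (hbc : PiecewiseC1On φ b c)
    (hL : Continuous (uncurry L)) :
    actionOn L φ a b + actionOn L φ b c = actionOn L φ a c :=
  intervalIntegral.integral_add_adjacent_intervals
    (hab.intervalIntegrable hL) (hbc.intervalIntegrable hL)

theorem actionOn_le_mul_add {L' : E → E → ℝ} {A B : ℝ} (h : PiecewiseC1On φ a b)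
    (hL : Continuous (uncurry L)) (hL' : Continuous (uncurry L'))
    (hle : ∀ x p, L' x p ≤ A * L x p + B) :
    actionOn L' φ a b ≤ A * actionOn L φ a b + B * (b - a) := by
  have integrable := (h.intervalIntegrable hL).const_mul A
  calc actionOn L' φ a b
      ≤ ∫ t in a..b, (A * L (φ t) (deriv φ t) + B) :=
        intervalIntegral.integral_mono_on h.le (h.intervalIntegrable hL')
          (integrable.add intervalIntegrable_const) fun _ _ ↦ hle _ _
    _ = A * actionOn L φ a b + B * (b - a) := by
        rw [intervalIntegral.integral_add integrable intervalIntegrable_const,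
          intervalIntegral.integral_const_mul, intervalIntegral.integral_const, smul_eq_mul,
          mul_comm B, actionOn]

theorem neg_mul_le_actionOn {C : ℝ} (h : PiecewiseC1On φ a b) (hL : Continuous (uncurry L))
    (hbdd : ∀ x p, -C ≤ L x p) : -C * (b - a) ≤ actionOn L φ a b := by
  have nonneg := h.actionOn_le_mul_add (L' := fun _ _ ↦ 0) (A := 1) (B := C) hL continuous_const
    fun x p ↦ by linarith [hbdd x p]
  simp only [actionOn, intervalIntegral.integral_zero] at nonneg ⊢
  linarith

theorem exists_actionOn_le_div {N : ℕ} (h : PiecewiseC1On φ a b) (hL : Continuous (uncurry L))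
    (hN : 0 < N) :
    ∃ s ≥ a, s + (b - a) / N ≤ b ∧
      actionOn L φ s (s + (b - a) / N) ≤ actionOn L φ a b / N := by
  have hN' : (0 : ℝ) < N := by exact_mod_cast hN
  set δ : ℝ := (b - a) / N with hδ
  have hδ₀ : 0 ≤ δ := div_nonneg (sub_nonneg.2 h.le) hN'.le
  let node : ℕ → ℝ := fun i ↦ a + i * δ
  have node_succ (i : ℕ) : node (i + 1) = node i + δ := by simp only [node]; push_cast; ring
  have node_last : node N = b := by simp only [node, hδ]; field_simp; ring
  have le_node (i : ℕ) : a ≤ node i := le_add_of_nonneg_right (by positivity)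
  have node_succ_le {i : ℕ} (hi : i < N) : node (i + 1) ≤ b := by
    rw [← node_last]
    simp only [node]
    gcongr
    exact hi
  have sum_eq : ∑ i ∈ Finset.range N, actionOn L φ (node i) (node (i + 1)) = actionOn L φ a b := by
    have := intervalIntegral.sum_integral_adjacent_intervals (a := node) fun i hi ↦
      (h.mono (le_node i) (node_succ i ▸ le_add_of_nonneg_right hδ₀)
        (node_succ_le hi)).intervalIntegrable hL
    rwa [node_last, show node 0 = a by simp [node]] at this
  obtain ⟨i, hi, hle⟩ : ∃ i ∈ Finset.range N,
      actionOn L φ (node i) (node (i + 1)) ≤ actionOn L φ a b / N := by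
    refine Finset.exists_le_of_sum_le (Finset.nonempty_range_iff.2 hN.ne') ?_
    rw [sum_eq, Finset.sum_const, Finset.card_range, nsmul_eq_mul, mul_div_cancel₀ _ hN'.ne']
  rw [node_succ] at hle
  exact ⟨node i, le_node i, node_succ i ▸ node_succ_le (Finset.mem_range.1 hi), hle⟩

end PiecewiseC1On

end Paths

section Connections

variable {E : Type*} [NormedAddCommGroup E] [NormedSpace ℝ E] {L : E → E → ℝ}
  {x y z : E} {T T₁ T₂ a a₁ a₂ A B C K η : ℝ}

/-- Some piecewise `C¹` path leads from `x` to `y` in time `T` with action exactly `a`. The time is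
a parameter because surgery on paths of duration `1` passes through paths of other durations. -/
def ConnectsIn (L : E → E → ℝ) (T : ℝ) (x y : E) (a : ℝ) : Prop :=
  ∃ φ : ℝ → E, PiecewiseC1On φ 0 T ∧ φ 0 = x ∧ φ T = y ∧ actionOn L φ 0 T = a

theorem PiecewiseC1On.connectsIn_rescale {φ : ℝ → E} {s t k : ℝ} (h : PiecewiseC1On φ s t)
    (hk : 0 < k) :
    ConnectsIn L ((t - s) / k) (φ s) (φ t) (k⁻¹ * actionOn (fun x p ↦ L x (k • p)) φ s t) := by
  have start : k * 0 + s = s := by ring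
  have finish : k * ((t - s) / k) + s = t := by field_simp; ring
  refine ⟨fun u ↦ φ (k * u + s), .comp_mul_add hk ?_, ?_, ?_, ?_⟩
  · rwa [start, finish]
  · simp only [start]
  · simp only [finish]
  · rw [actionOn_comp_mul_add hk.ne', start, finish]

theorem PiecewiseC1On.connectsIn {φ : ℝ → E} {s t : ℝ} (h : PiecewiseC1On φ s t) :
    ConnectsIn L (t - s) (φ s) (φ t) (actionOn L φ s t) := by
  simpa only [div_one, inv_one, one_mul, one_smul] using h.connectsIn_rescale (L := L) one_pos

theorem ConnectsIn.trans (hxy : ConnectsIn L T₁ x y a₁) (hyz : ConnectsIn L T₂ y z a₂)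
    (hL : Continuous (uncurry L)) : ConnectsIn L (T₁ + T₂) x z (a₁ + a₂) := by
  obtain ⟨φ, hφ, rfl, hφy, rfl⟩ := hxy
  obtain ⟨ψ, hψ, hψy, rfl, rfl⟩ := hyz
  let delayed : ℝ → E := fun t ↦ ψ (1 * t + -T₁)
  let χ : ℝ → E := fun t ↦ if t ≤ T₁ then φ t else delayed t
  have start : 1 * T₁ + -T₁ = 0 := by ring
  have finish : 1 * (T₁ + T₂) + -T₁ = T₂ := by ring
  have hχφ : EqOn χ φ (Icc 0 T₁) := fun t ht ↦ if_pos ht.2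
  have hχψ : EqOn χ delayed (Icc T₁ (T₁ + T₂)) := by
    intro t ht
    rcases ht.1.eq_or_lt with rfl | hlt
    · simp only [χ, delayed, le_rfl, if_true, start, hφy, hψy]
    · exact if_neg hlt.not_ge
  have hdelayed : PiecewiseC1On delayed T₁ (T₁ + T₂) :=
    .comp_mul_add one_pos (by rwa [start, finish])
  have hfirst := hφ.congr hχφ
  have hsecond := hdelayed.congr hχψ
  refine ⟨χ, hfirst.trans hsecond, hχφ ⟨le_rfl, hφ.le⟩, ?_, ?_⟩
  · rw [hχψ ⟨hdelayed.le, le_rfl⟩]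
    simp only [delayed, finish]
  · rw [← hfirst.actionOn_add hsecond hL, actionOn_congr hφ.le hχφ,
      actionOn_congr hdelayed.le hχψ, actionOn_comp_mul_add one_ne_zero, start, finish]
    simp only [inv_one, one_mul, one_smul]

theorem exists_connectsIn_of_le_on_segment (hL : Continuous (uncurry L)) (hT : 0 < T)
    (hK : ∀ z ∈ segment ℝ x y, L z (T⁻¹ • (y - x)) ≤ K) :
    ∃ a ≤ K * T, ConnectsIn L T x y a := by
  let φ : ℝ → E := fun t ↦ x + t • T⁻¹ • (y - x)
  have deriv_φ (t : ℝ) : deriv φ t = T⁻¹ • (y - x) := by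
    simpa only [one_smul, id] using (((hasDerivAt_id t).smul_const _).const_add x).deriv
  have mem_segment (t : ℝ) (ht : t ∈ Icc 0 T) : φ t ∈ segment ℝ x y := by
    rw [segment_eq_image']
    exact ⟨t * T⁻¹, ⟨mul_nonneg ht.1 (inv_nonneg.2 hT.le),
      by simpa only [div_eq_mul_inv] using div_le_one_of_le₀ ht.2 hT.le⟩,
      by simp only [φ, mul_smul]⟩
  have hφ : PiecewiseC1On φ 0 T :=
    .of_contDiffOn hT.le (ContDiff.contDiffOn (by fun_prop))
  refine ⟨actionOn L φ 0 T, ?_, φ, hφ, by simp [φ], by simp [φ, hT.ne'], rfl⟩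
  calc actionOn L φ 0 T ≤ ∫ _ in (0 : ℝ)..T, K :=
        intervalIntegral.integral_mono_on hT.le (hφ.intervalIntegrable hL)
          intervalIntegrable_const fun t ht ↦ deriv_φ t ▸ hK _ (mem_segment t ht)
    _ = K * T := by rw [intervalIntegral.integral_const, sub_zero, smul_eq_mul, mul_comm]

theorem exists_connectsIn (hL : Continuous (uncurry L)) (hT : 0 < T) (x y : E) :
    ∃ a, ConnectsIn L T x y a := by
  have isCompact_segment : IsCompact (segment ℝ x y) := by
    rw [segment_eq_image']
    exact isCompact_Icc.image (by fun_prop)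
  obtain ⟨K, hK⟩ := (isCompact_segment.image
    (hL.comp (continuous_id.prodMk continuous_const))).bddAbove
  obtain ⟨a, -, ha⟩ := exists_connectsIn_of_le_on_segment hL hT fun z hz ↦ hK ⟨z, hz, rfl⟩
  exact ⟨a, ha⟩

theorem eventually_exists_connectsIn_le (hL : Continuous (uncurry L)) (hT : 0 < T)
    (hK : L x 0 < K) : ∀ᶠ p in 𝓝 (x, x), ∃ a ≤ K * T, ConnectsIn L T p.1 p.2 a := by
  have lagrangian_lt : ∀ᶠ q in 𝓝 x ×ˢ 𝓝 (0 : E), L q.1 q.2 < K := by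
    rw [← nhds_prod_eq]
    exact hL.continuousAt.eventually_lt_const hK
  obtain ⟨P, hP, Q, hQ, hPQ⟩ := eventually_prod_iff.1 lagrangian_lt
  obtain ⟨r, hr, hball⟩ := Metric.eventually_nhds_iff_ball.1 hP
  have velocity : Tendsto (fun p : E × E ↦ T⁻¹ • (p.2 - p.1)) (𝓝 (x, x)) (𝓝 0) := by
    have : Continuous fun p : E × E ↦ T⁻¹ • (p.2 - p.1) := by fun_prop
    simpa only [sub_self, smul_zero] using this.tendsto (x, x)
  filter_upwards [velocity.eventually hQ,
    continuousAt_fst.preimage_mem_nhds (Metric.ball_mem_nhds x hr),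
    continuousAt_snd.preimage_mem_nhds (Metric.ball_mem_nhds x hr)] with p hp h₁ h₂
  exact exists_connectsIn_of_le_on_segment hL hT fun z hz ↦
    (hPQ (hball z ((convex_ball x r).segment_subset h₁ h₂ hz)) hp).le

theorem PiecewiseC1On.connectsIn_double_speed {φ : ℝ → E} {s t : ℝ} (h : PiecewiseC1On φ 0 T)
    (hs : 0 ≤ s) (hst : s ≤ t) (ht : t ≤ T) (hL : Continuous (uncurry L))
    (hdoubling : ∀ x p, L x ((2 : ℝ) • p) ≤ A * L x p + B) :
    ∃ a ≤ actionOn L φ 0 T - actionOn L φ s t + (A * actionOn L φ s t + B * (t - s)) / 2,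
      ConnectsIn L (T - (t - s) / 2) (φ 0) (φ T) a := by
  obtain ⟨before, rest⟩ := h.split ⟨hs, hst.trans ht⟩
  obtain ⟨middle, after⟩ := rest.split ⟨hst, ht⟩
  have hL₂ : Continuous (uncurry fun x p ↦ L x ((2 : ℝ) • p)) :=
    hL.comp (continuous_fst.prodMk (continuous_snd.const_smul 2))
  have doubled := middle.actionOn_le_mul_add hL hL₂ hdoubling
  have connects := (before.connectsIn.trans (middle.connectsIn_rescale two_pos) hL).trans
    after.connectsIn hL
  have duration : s - 0 + (t - s) / 2 + (T - t) = T - (t - s) / 2 := by ring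
  rw [duration] at connects
  refine ⟨_, ?_, connects⟩
  linarith [before.actionOn_add rest hL, middle.actionOn_add after hL]

theorem ConnectsIn.exists_shorten (h : ConnectsIn L T x y a) (hL : Continuous (uncurry L))
    (hbdd : ∀ x p, -C ≤ L x p) (hA : 0 ≤ A)
    (hdoubling : ∀ x p, L x ((2 : ℝ) • p) ≤ A * L x p + B) {N : ℕ} (hN : 0 < N) :
    ∃ b ≤ a + (C * T + (A * a + B * T) / 2) / N, ConnectsIn L (T - T / N / 2) x y b := by
  obtain ⟨φ, hφ, rfl, rfl, rfl⟩ := h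
  obtain ⟨s, hs, hsT, average⟩ := hφ.exists_actionOn_le_div hL hN
  rw [sub_zero] at hsT average
  have hst : s ≤ s + T / N := le_add_of_nonneg_right (div_nonneg hφ.le N.cast_nonneg)
  obtain ⟨b, hb, connects⟩ := hφ.connectsIn_double_speed hs hst hsT hL hdoubling
  rw [add_sub_cancel_left] at hb connects
  refine ⟨b, hb.trans ?_, connects⟩
  have lower := (hφ.mono hs hst hsT).neg_mul_le_actionOn hL hbdd
  rw [add_sub_cancel_left] at lower
  have upper := mul_le_mul_of_nonneg_left average hA
  calc actionOn L φ 0 T - actionOn L φ s (s + T / N) +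
        (A * actionOn L φ s (s + T / N) + B * (T / N)) / 2
      ≤ actionOn L φ 0 T + C * (T / N) + (A * (actionOn L φ 0 T / N) + B * (T / N)) / 2 := by
        linarith
    _ = actionOn L φ 0 T + (C * T + (A * actionOn L φ 0 T + B * T) / 2) / N := by ring

theorem eventually_exists_connectsIn_le_add (hL : Continuous (uncurry L))
    (hbdd : ∀ x p, -C ≤ L x p) (hA : 0 ≤ A)
    (hdoubling : ∀ x p, L x ((2 : ℝ) • p) ≤ A * L x p + B) (z₀ : E × E) (M : ℝ) (hη : 0 < η) :
    ∀ᶠ w in 𝓝 (z₀, z₀), ∀ a ≤ M, ConnectsIn L 1 w.1.1 w.1.2 a →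
      ∃ b ≤ a + η, ConnectsIn L 1 w.2.1 w.2.2 b := by
  obtain ⟨K, hK⟩ := exists_gt (max (L z₀.1 0) (L z₀.2 0))
  obtain ⟨N, hN⟩ := exists_nat_gt (max 0 ((C + (A * M + B) / 2 + K / 2) / η))
  have hN₀ : (0 : ℝ) < N := (le_max_left _ _).trans_lt hN
  have error_le : (C + (A * M + B) / 2 + K / 2) / N ≤ η := by
    have := (le_max_right _ _).trans_lt hN
    rw [div_lt_iff₀ hη] at this
    rw [div_le_iff₀ hN₀]
    linarith
  have hT : (0 : ℝ) < 1 / N / 4 := by positivity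
  have fst_swap : Tendsto (fun w : (E × E) × E × E ↦ (w.2.1, w.1.1)) (𝓝 (z₀, z₀))
      (𝓝 (z₀.1, z₀.1)) := Continuous.tendsto (by fun_prop) _
  have snd_pair : Tendsto (fun w : (E × E) × E × E ↦ (w.1.2, w.2.2)) (𝓝 (z₀, z₀))
      (𝓝 (z₀.2, z₀.2)) := Continuous.tendsto (by fun_prop) _
  filter_upwards [
    fst_swap.eventually (eventually_exists_connectsIn_le hL hT ((le_max_left _ _).trans_lt hK)),
    snd_pair.eventually (eventually_exists_connectsIn_le hL hT ((le_max_right _ _).trans_lt hK))]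
    with w ⟨a₁, ha₁, first⟩ ⟨a₂, ha₂, last⟩ a haM h
  obtain ⟨b, hb, shortened⟩ := h.exists_shorten hL hbdd hA hdoubling (Nat.cast_pos.1 hN₀)
  have connects := (first.trans shortened hL).trans last hL
  have duration : (1 : ℝ) / N / 4 + (1 - 1 / N / 2) + 1 / N / 4 = 1 := by ring
  rw [duration] at connects
  refine ⟨_, ?_, connects⟩
  calc a₁ + b + a₂
      ≤ K * (1 / N / 4) + (a + (C * 1 + (A * M + B * 1) / 2) / N) + K * (1 / N / 4) := by
        have : b ≤ a + (C * 1 + (A * M + B * 1) / 2) / N := hb.trans (by gcongr)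
        gcongr
    _ = a + (C + (A * M + B) / 2 + K / 2) / N := by ring
    _ ≤ a + η := by gcongr

end Connections

theorem continuousAt_of_eventually_le_add {X : Type*} [TopologicalSpace X] {f : X → ℝ} {x : X}
    (h : ∀ M η, 0 < η → ∀ᶠ w in 𝓝 (x, x), f w.1 < M → f w.2 ≤ f w.1 + η) :
    ContinuousAt f x := by
  have from_base : Tendsto (fun y ↦ (x, y)) (𝓝 x) (𝓝 (x, x)) :=
    Continuous.tendsto (by fun_prop) _
  have to_base : Tendsto (fun y ↦ (y, x)) (𝓝 x) (𝓝 (x, x)) :=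
    Continuous.tendsto (by fun_prop) _
  rw [ContinuousAt, Metric.tendsto_nhds]
  intro ε hε
  filter_upwards [from_base.eventually (h (f x + 1) (ε / 2) (half_pos hε)),
    to_base.eventually (h (f x + ε) (ε / 2) (half_pos hε))] with y upper lower
  have hupper := upper (by linarith)
  have hlower := lower (by linarith)
  rw [Real.dist_eq, abs_lt]
  constructor <;> linarith

section Control

variable {d : ℕ} {L : EuclideanSpace ℝ (Fin d) → EuclideanSpace ℝ (Fin d) → ℝ}
  {x y : EuclideanSpace ℝ (Fin d)} {a A B C η : ℝ}

theorem piecewiseC1_iff_piecewiseC1On {φ : ℝ → EuclideanSpace ℝ (Fin d)} :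
    PiecewiseC1 φ ↔ PiecewiseC1On φ 0 1 := by
  constructor
  · rintro ⟨-, n, t, ht, h₀, h₁, hφ⟩
    exact h₀ ▸ h₁ ▸ .of_partition ht hφ
  · exact fun h ↦ ⟨h.continuousOn, h.exists_partition⟩

theorem mem_actionSet_iff : a ∈ actionSet L x y ↔ ConnectsIn L 1 x y a :=
  exists_congr fun _ ↦ and_congr_left' piecewiseC1_iff_piecewiseC1On

theorem actionSet_nonempty (hL : Continuous (uncurry L)) : (actionSet L x y).Nonempty :=
  (exists_connectsIn hL one_pos x y).imp fun _ ↦ mem_actionSet_iff.2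

theorem bddBelow_actionSet (hL : Continuous (uncurry L)) (hbdd : ∀ x p, -C ≤ L x p) :
    BddBelow (actionSet L x y) := by
  refine ⟨-C, fun a ha ↦ ?_⟩
  obtain ⟨φ, hφ, -, -, rfl⟩ := mem_actionSet_iff.1 ha
  simpa only [sub_zero, mul_one] using hφ.neg_mul_le_actionOn hL hbdd

theorem eventually_controlFn_le_add (hL : Continuous (uncurry L)) (hbdd : ∀ x p, -C ≤ L x p)
    (hA : 0 ≤ A) (hdoubling : ∀ x p, L x ((2 : ℝ) • p) ≤ A * L x p + B)
    (z₀ : EuclideanSpace ℝ (Fin d) × EuclideanSpace ℝ (Fin d)) (M : ℝ) (hη : 0 < η) :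
    ∀ᶠ w in 𝓝 (z₀, z₀), controlFn L w.1.1 w.1.2 < M →
      controlFn L w.2.1 w.2.2 ≤ controlFn L w.1.1 w.1.2 + η := by
  filter_upwards [eventually_exists_connectsIn_le_add hL hbdd hA hdoubling z₀ M (half_pos hη)]
    with w hw hM
  have sInf_lt : sInf (actionSet L w.1.1 w.1.2) < min M (controlFn L w.1.1 w.1.2 + η / 2) :=
    lt_min hM (lt_add_of_pos_right _ (half_pos hη))
  obtain ⟨a, ha, hlt⟩ := exists_lt_of_csInf_lt (actionSet_nonempty hL) sInf_lt
  rw [lt_min_iff] at hlt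
  obtain ⟨b, hb, connects⟩ := hw a hlt.1.le (mem_actionSet_iff.1 ha)
  calc controlFn L w.2.1 w.2.2 ≤ b :=
        csInf_le (bddBelow_actionSet hL hbdd) (mem_actionSet_iff.2 connects)
    _ ≤ a + η / 2 := hb
    _ ≤ controlFn L w.1.1 w.1.2 + η := by linarith

theorem control_continuous_general (hL : Continuous (uncurry L)) (hbdd : ∀ x p, -C ≤ L x p)
    (hA : 0 ≤ A) (hdoubling : ∀ x p, L x ((2 : ℝ) • p) ≤ A * L x p + B) :
    Continuous fun z : EuclideanSpace ℝ (Fin d) × EuclideanSpace ℝ (Fin d) ↦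
      controlFn L z.1 z.2 :=
  continuous_iff_continuousAt.2 fun z₀ ↦ continuousAt_of_eventually_le_add fun M _ hη ↦
    eventually_controlFn_le_add hL hbdd hA hdoubling z₀ M hη

end Control

section Growth

variable {E : Type*} [NormedAddCommGroup E] {L : E → E → ℝ} {c₁ c₂ C q : ℝ}

theorem neg_le_of_rpow_growth (hc₁ : 0 ≤ c₁) (hlow : ∀ x p, c₁ * ‖p‖ ^ q - C ≤ L x p) (x p : E) :
    -C ≤ L x p := by
  have : 0 ≤ c₁ * ‖p‖ ^ q := by positivity
  linarith [hlow x p]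

theorem two_smul_le_of_rpow_growth [NormedSpace ℝ E] (hc₁ : 0 < c₁) (hc₂ : 0 ≤ c₂)
    (hlow : ∀ x p, c₁ * ‖p‖ ^ q - C ≤ L x p) (hup : ∀ x p, L x p ≤ c₂ * ‖p‖ ^ q + C) (x p : E) :
    L x ((2 : ℝ) • p) ≤ c₂ * 2 ^ q / c₁ * L x p + (c₂ * 2 ^ q / c₁ * C + C) := by
  have norm_rpow_le : ‖p‖ ^ q ≤ (L x p + C) / c₁ := by
    rw [le_div_iff₀ hc₁]
    linarith [hlow x p]
  calc L x ((2 : ℝ) • p) ≤ c₂ * ‖(2 : ℝ) • p‖ ^ q + C := hup x _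
    _ = c₂ * 2 ^ q * ‖p‖ ^ q + C := by
        rw [norm_smul, Real.norm_two, Real.mul_rpow zero_le_two (norm_nonneg p), mul_assoc]
    _ ≤ c₂ * 2 ^ q * ((L x p + C) / c₁) + C := by gcongr
    _ = c₂ * 2 ^ q / c₁ * L x p + (c₂ * 2 ^ q / c₁ * C + C) := by ring

end Growth

/-- under the growth bounds `c₁|p|^q − C ≤ L(x,p) ≤ c₂|p|^q + C` with
`q = 2k/(2k−1)`, the control function `(x,y) ↦ l(x,y)` is continuous on `ℝ^d × ℝ^d`. -/
theorem control_continuous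
    (d k : ℕ) (hk : 1 ≤ k)
    (L : EuclideanSpace ℝ (Fin d) → EuclideanSpace ℝ (Fin d) → ℝ)
    (hLcont : Continuous fun p : EuclideanSpace ℝ (Fin d) × EuclideanSpace ℝ (Fin d) =>
      L p.1 p.2)
    (c₁ c₂ C : ℝ) (hc₁ : 0 < c₁) (hc₂ : 0 < c₂) (hC : 0 < C)
    (hlow : ∀ x p : EuclideanSpace ℝ (Fin d),
      c₁ * ‖p‖ ^ ((2 * k : ℝ) / (2 * k - 1)) - C ≤ L x p)
    (hup : ∀ x p : EuclideanSpace ℝ (Fin d),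
      L x p ≤ c₂ * ‖p‖ ^ ((2 * k : ℝ) / (2 * k - 1)) + C) :
    Continuous fun q : EuclideanSpace ℝ (Fin d) × EuclideanSpace ℝ (Fin d) =>
      controlFn L q.1 q.2 :=
  control_continuous_general hLcont (neg_le_of_rpow_growth hc₁.le hlow) (by positivity)
    (two_smul_le_of_rpow_growth hc₁ hc₂.le hlow hup)
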